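/- Let 𝒳 and 𝒴 be Polish spaces and let P_{XY} be a Borel probability measure on 𝒳 × 𝒴 with marginals P_X on 𝒳 and P_Y on 𝒴, and let I(X;Y) denote the Kullback–Leibler divergence of P_{XY} from the product measure P_X ⊗ P_Y. Then for each δ > 0 and ε > 0 there exists ε̄(ε, δ) > 0 with the following property: for any N and any family of sequences y^(n) ∈ 𝒴^n, n ≥ N, satisfying d_LP(P_{y^(n)}, P_Y) < ε̄(ε, δ) for all n ≥ N, if X^n = (X₁,…,X_n) are i.i.d. with distribution P_X, then liminf_{n→∞} (1/n)·log Pr( d_LP(P_{X^n y^(n)}, P_{XY}) < ε ) ≥ −I(X;Y) − δ, where P_{X^n y^(n)} is the joint empirical distribution of the pairs ((X₁,y₁^n),…,(X_n,y_n^n)). -/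

import Mathlib

/-!
The lower bound is obtained by a change of measure, uniformly in the sequence `y`. Only the case of
finite mutual information `I` needs an argument, since otherwise the right-hand bound is `-∞`.

Quantize both factors by finitely many cells which are small continuity sets of the marginals, except
for one cell of small mass (`exists_quantizer`). Let `b` be the quantizer of `𝒴` and let `Q k` be the
conditional law of `X` given that `Y` lies in the `k`-th cell (`exists_conditional_law`). Given
`y : Fin n → 𝒴`, consider the tilted law `μ = ⨂ i, Q (b (y i))` on `𝒳ⁿ`.

* If the empirical distribution of `y` is Lévy–Prokhorov close to `P_Y`, then every cell of `𝒴`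
  contains at most about the expected number of the `y i` (`exists_levyProkhorov_radius`; this is where
  continuity sets matter). Hence, under `μ`, each product cell has expected empirical mass at most
  about its `P_{XY}`-mass, and by Chebyshev's inequality (`chebyshev_pi`) the same holds for the
  empirical mass itself, with probability `1 - O(1/n)`. Upper bounds on the masses of the cells are
  enough for Lévy–Prokhorov proximity (`levyProkhorovDist_le_of_cells`).
* The divergence of `μ` from the i.i.d. law is at most `∑ i, KL(Q (b (y i)) ‖ P_X)`
  (`klDiv_pi_le`), that is, up to the error in the cell counts,
  `n * ∑ k, P_Y(B_k) * KL(Q k ‖ P_X)`. By the data processing inequality on each strip `𝒳 × B_k` and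
  the superadditivity of divergence over the strips (`sum_klDiv_restrict_le`) this is at most `n * I`.

Both facts are collected in `exists_tilted_law`, with constants that do not depend on `n` and `y`.
An event of `μ`-probability `q` has probability at least `exp (-(D + 1) / q) * q` under any law from
which `μ` has divergence `D` (`log_measureReal_ge`). With `q = 1 - O(1/n)` and `D ≤ n * (I + δ / 2)`,
taking logarithms and dividing by `n` gives the claim (`eventually_rate`).
-/

open MeasureTheory ProbabilityTheory Filter Topology
open scoped ENNReal ProbabilityTheory Classical

/-- The empirical distribution of a finite sequence `x : Fin n → 𝒳`:
`P_{x^n} = (1/n) · ∑_{ℓ=1}^n δ_{x_ℓ}`. -/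
noncomputable def empDist {𝒳 : Type*} [MeasurableSpace 𝒳] {n : ℕ}
    (x : Fin n → 𝒳) : Measure 𝒳 :=
  (n : ℝ≥0∞)⁻¹ • ∑ i : Fin n, Measure.dirac (x i)

/-- Kullback–Leibler divergence of `μ` from `ν`: `∫ log (dμ/dν) dμ` if `μ ≪ ν` (and this
integral makes sense), and `+∞` otherwise. -/
noncomputable def klDiv {α : Type*} [MeasurableSpace α] (μ ν : Measure α) : EReal :=
  if μ ≪ ν ∧ Integrable (llr μ ν) μ then ((∫ x, llr μ ν x ∂μ : ℝ) : EReal) else ⊤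

namespace JointTypicality

/-! ### Kullback–Leibler divergence: restriction, products, change of measure -/

section KL

variable {α β : Type*} [MeasurableSpace α] [MeasurableSpace β]

lemma klDiv_restrict_eq (μ ν : Measure α) [IsFiniteMeasure μ] [IsFiniteMeasure ν] (h : μ ≪ ν)
    {s : Set α} (hs : MeasurableSet s) :
    InformationTheory.klDiv (μ.restrict s) (ν.restrict s) =
      ∫⁻ x in s, ENNReal.ofReal (InformationTheory.klFun (μ.rnDeriv ν x).toReal) ∂ν := by
  rw [InformationTheory.klDiv_eq_lintegral_klFun_of_ac (h.restrict s)]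
  refine lintegral_congr_ae ?_
  have h1 : μ.restrict s = (ν.restrict s).withDensity (μ.rnDeriv ν) := by
    rw [← restrict_withDensity hs, Measure.withDensity_rnDeriv_eq _ _ h]
  have h2 := Measure.rnDeriv_withDensity (ν.restrict s) (Measure.measurable_rnDeriv μ ν)
  rw [← h1] at h2
  filter_upwards [h2] with x hx
  rw [hx]

lemma klDiv_restrict_le (μ ν : Measure α) [IsFiniteMeasure μ] [IsFiniteMeasure ν]
    {s : Set α} (hs : MeasurableSet s) :
    InformationTheory.klDiv (μ.restrict s) (ν.restrict s) ≤ InformationTheory.klDiv μ ν := by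
  by_cases h : μ ≪ ν
  · rw [klDiv_restrict_eq μ ν h hs, InformationTheory.klDiv_eq_lintegral_klFun_of_ac h]
    exact setLIntegral_le_lintegral _ _
  · simp [InformationTheory.klDiv_of_not_ac h]

/-- The divergences of the restrictions to pairwise disjoint measurable sets add up to at most the
total divergence; only the integral form with `klFun`, whose integrand is nonnegative, is used. -/
lemma sum_klDiv_restrict_le {ι : Type*} [Fintype ι] (μ ν : Measure α) [IsFiniteMeasure μ]
    [IsFiniteMeasure ν] {s : ι → Set α} (hs : ∀ i, MeasurableSet (s i))
    (hd : Pairwise (Function.onFun Disjoint s)) :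
    ∑ i, InformationTheory.klDiv (μ.restrict (s i)) (ν.restrict (s i)) ≤
      InformationTheory.klDiv μ ν := by
  by_cases h : μ ≪ ν
  · simp_rw [fun i => klDiv_restrict_eq μ ν h (hs i)]
    rw [InformationTheory.klDiv_eq_lintegral_klFun_of_ac h, ← tsum_fintype (L := .unconditional _),
      ← lintegral_iUnion hs hd]
    exact setLIntegral_le_lintegral _ _
  · simp [InformationTheory.klDiv_of_not_ac h]

/-- Divergence between products of probability measures; this is the chain rule applied to
constant kernels, the second term being reduced to a marginal by swapping coordinates. -/
lemma klDiv_prod_le (μ₁ μ₂ : Measure α) (ν₁ ν₂ : Measure β) [IsProbabilityMeasure μ₁]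
    [IsProbabilityMeasure μ₂] [IsProbabilityMeasure ν₁] [IsProbabilityMeasure ν₂] :
    InformationTheory.klDiv (μ₁.prod ν₁) (μ₂.prod ν₂) ≤
      InformationTheory.klDiv μ₁ μ₂ + InformationTheory.klDiv ν₁ ν₂ := by
  have h1 : InformationTheory.klDiv (μ₁.prod ν₁) (μ₁.prod ν₂) ≤
      InformationTheory.klDiv ν₁ ν₂ := by
    rw [← Measure.prod_swap (μ := ν₁), ← Measure.prod_swap (μ := ν₂)]
    refine (InformationTheory.klDiv_map_le _ _ measurable_swap).trans ?_
    rw [← Measure.compProd_const, ← Measure.compProd_const,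
      InformationTheory.klDiv_compProd_left]
  rw [← Measure.compProd_const, ← Measure.compProd_const,
    InformationTheory.klDiv_compProd_eq_add, Measure.compProd_const, Measure.compProd_const]
  gcongr

lemma klDiv_pi_le : ∀ {n : ℕ} (μ ν : Fin n → Measure α) [∀ i, IsProbabilityMeasure (μ i)]
    [∀ i, IsProbabilityMeasure (ν i)],
    InformationTheory.klDiv (Measure.pi μ) (Measure.pi ν) ≤
      ∑ i, InformationTheory.klDiv (μ i) (ν i)
  | 0, μ, ν, _, _ => by
    have : μ = ν := Subsingleton.elim _ _
    subst this
    simp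
  | n + 1, μ, ν, _, _ => by
    have e1 := (measurePreserving_piFinSuccAbove μ 0).symm
    have e2 := (measurePreserving_piFinSuccAbove ν 0).symm
    rw [← e1.map_eq, ← e2.map_eq, Fin.sum_univ_succ]
    refine (InformationTheory.klDiv_map_le _ _ (MeasurableEquiv.measurable _)).trans ?_
    refine (klDiv_prod_le _ _ _ _).trans ?_
    gcongr
    exact klDiv_pi_le _ _

/-- Change of measure: an event of `μ`-probability `q` has `ν`-probability at least
`exp (-(D + 1) / q) * q`, where `D` is the divergence of `μ` from `ν`. This is Jensen's inequality
for the restrictions of `μ` and `ν` to the event. -/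
lemma log_measureReal_ge (μ ν : Measure α) [IsProbabilityMeasure μ] [IsProbabilityMeasure ν]
    (hD : InformationTheory.klDiv μ ν ≠ ∞) {s : Set α} (hs : MeasurableSet s)
    (hq : 0 < μ.real s) :
    0 < ν.real s ∧
      Real.log (μ.real s) - ((InformationTheory.klDiv μ ν).toReal + 1) / μ.real s ≤
        Real.log (ν.real s) := by
  have hac := (InformationTheory.klDiv_ne_top_iff.1 hD).1
  have hle := klDiv_restrict_le μ ν hs
  have hR : InformationTheory.klDiv (μ.restrict s) (ν.restrict s) ≠ ∞ := ne_top_of_le_ne_top hD hle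
  obtain ⟨h1, h2⟩ := InformationTheory.klDiv_ne_top_iff.1 hR
  have h3 := InformationTheory.mul_log_le_toReal_klDiv h1 h2
  have h4 := ENNReal.toReal_mono hD hle
  simp only [measureReal_restrict_apply_univ] at h3
  have hp : 0 < ν.real s := by
    rcases (measureReal_nonneg (μ := ν) (s := s)).eq_or_lt with h0 | h0
    · have : ν s = 0 := by
        rwa [eq_comm, measureReal_eq_zero_iff] at h0
      rw [measureReal_def, hac this] at hq
      simp at hq
    · exact h0
  refine ⟨hp, ?_⟩
  rw [Real.log_div hq.ne' hp.ne'] at h3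
  have hq1 : μ.real s ≤ 1 := measureReal_le_one
  rw [sub_le_iff_le_add, ← sub_le_iff_le_add', le_div_iff₀ hq]
  nlinarith

end KL

end JointTypicality

namespace JointTypicality

/-! ### Quantization of a separable metric space -/

section Quantization

/-- A probability measure `μ` on a separable metric space admits a finite quantizer `c` whose cells
are small `μ`-continuity sets, except for the last cell, which has small mass. -/
lemma exists_quantizer {Ω : Type*} [MetricSpace Ω] [TopologicalSpace.SeparableSpace Ω]
    [MeasurableSpace Ω] [BorelSpace Ω] (μ : Measure Ω) [IsProbabilityMeasure μ]
    {ε η : ℝ} (hε : 0 < ε) (hη : 0 < η) :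
    ∃ (m : ℕ) (c : Ω → Fin (m + 1)), (∀ k, MeasurableSet (c ⁻¹' {k})) ∧
      (∀ k, μ (frontier (c ⁻¹' {k})) = 0) ∧
      (∀ y y', c y = c y' → c y ≠ Fin.last m → dist y y' < ε) ∧
      μ.real (c ⁻¹' {Fin.last m}) ≤ η := by
  have : Nonempty Ω := nonempty_of_isProbabilityMeasure μ
  obtain ⟨u, hu⟩ := TopologicalSpace.exists_dense_seq Ω
  have hr : ∀ i, ∃ r ∈ Set.Ioo (ε / 4) (ε / 2), μ (frontier (Metric.thickening r {u i})) = 0 :=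
    fun i => exists_null_frontier_thickening μ {u i} (by linarith)
  choose r hr hfr using hr
  simp only [Metric.thickening_singleton] at hfr
  set U : ℕ → Set Ω := fun i => Metric.ball (u i) (r i) with hU
  have hUm : ∀ i, MeasurableSet (U i) := fun i => measurableSet_ball
  have hcov : ∀ y, ∃ i, y ∈ U i := by
    intro y
    obtain ⟨i, hi⟩ := hu.exists_dist_lt y (show 0 < ε / 4 by linarith)
    exact ⟨i, hi.trans (hr i).1⟩
  -- `V k` is the part of the space left uncovered by the first `k` balls.
  set V : ℕ → Set Ω := fun k => ⋂ i ∈ Finset.range k, (U i)ᶜ with hV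
  have hVs : ∀ k, V (k + 1) = V k ∩ (U k)ᶜ := by
    intro k
    simp only [hV, Finset.range_add_one, Finset.mem_insert, Set.iInter_iInter_eq_or_left]
    exact Set.inter_comm _ _
  have hVm : ∀ k, MeasurableSet (V k) := fun k =>
    Finset.measurableSet_biInter _ fun i _ => (hUm i).compl
  have hVf : ∀ k, μ (frontier (V k)) = 0 := by
    intro k
    induction k with
    | zero => simp [hV]
    | succ k ih =>
      rw [hVs]
      exact null_frontier_inter ih (by rw [frontier_compl]; exact hfr k)
  have hVt : Tendsto (fun k => μ (V k)) atTop (𝓝 0) := by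
    have h0 : ⋂ k, V k = ∅ := by
      ext y
      obtain ⟨i, hi⟩ := hcov y
      simp only [Set.mem_iInter, Set.mem_empty_iff_false, iff_false, not_forall]
      refine ⟨i + 1, ?_⟩
      rw [hVs]
      exact fun h => h.2 hi
    have hanti : Antitone V := antitone_nat_of_succ_le fun k => by
      rw [hVs]; exact Set.inter_subset_left
    have := tendsto_measure_iInter_atTop (μ := μ) (fun k => (hVm k).nullMeasurableSet) hanti
      ⟨0, measure_ne_top _ _⟩
    rwa [h0, measure_empty] at this
  obtain ⟨m, hm⟩ := (hVt.eventually_le_const (ENNReal.ofReal_pos.2 hη)).exists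
  have hmem : ∀ k y, y ∈ V k ↔ k ≤ Nat.find (hcov y) := by
    intro k y
    simp [hV, Nat.le_find_iff]
  set c : Ω → Fin (m + 1) := fun y => ⟨min (Nat.find (hcov y)) m, by omega⟩ with hc
  have hlast : c ⁻¹' {Fin.last m} = V m := by
    ext y
    simp [hc, hmem, Fin.ext_iff]
  have hcell : ∀ k : Fin (m + 1), k ≠ Fin.last m → c ⁻¹' {k} = V k ∩ U k := by
    intro k hk
    have hk' : (k : ℕ) < m := Fin.val_lt_last hk
    have : V k ∩ U k = V k \ V (k + 1) := by
      rw [hVs]; ext y; simp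
    rw [this]
    ext y
    simp only [hc, Set.mem_preimage, Set.mem_singleton_iff, Fin.ext_iff, Set.mem_sdiff, hmem]
    omega
  refine ⟨m, c, ?_, ?_, ?_, ?_⟩
  · intro k
    by_cases hk : k = Fin.last m
    · rw [hk, hlast]; exact hVm m
    · rw [hcell k hk]; exact (hVm _).inter (hUm _)
  · intro k
    by_cases hk : k = Fin.last m
    · rw [hk, hlast]; exact hVf m
    · rw [hcell k hk]; exact null_frontier_inter (hVf _) (hfr _)
  · intro y y' h hne
    have h1 : y ∈ c ⁻¹' {c y} := rfl
    have h2 : y' ∈ c ⁻¹' {c y} := h.symm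
    rw [hcell _ hne] at h1 h2
    have := (hr (c y)).2
    calc dist y y' ≤ dist y (u (c y)) + dist y' (u (c y)) := dist_triangle_right _ _ _
      _ < r (c y) + r (c y) := add_lt_add h1.2 h2.2
      _ < ε := by linarith
  · rw [hlast]
    exact ENNReal.toReal_le_of_le_ofReal hη.le hm

/-- Lévy–Prokhorov proximity to `μ` bounds from above the masses of finitely many
`μ`-continuity sets. -/
lemma exists_levyProkhorov_radius {Ω : Type*} [MetricSpace Ω] [MeasurableSpace Ω] [BorelSpace Ω]
    (μ : Measure Ω) [IsProbabilityMeasure μ] {ι : Type*} [Finite ι] (s : ι → Set Ω)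
    (hs : ∀ i, MeasurableSet (s i)) (hf : ∀ i, μ (frontier (s i)) = 0) {η : ℝ} (hη : 0 < η) :
    ∃ r > 0, ∀ (ν : Measure Ω) [IsProbabilityMeasure ν], levyProkhorovDist ν μ < r →
      ∀ i, ν.real (s i) ≤ μ.real (s i) + η := by
  have h1 : ∀ i, ∀ᶠ r in 𝓝 (0 : ℝ), μ.real (Metric.cthickening r (s i)) < μ.real (s i) + η / 2 := by
    intro i
    have hcl : μ (closure (s i)) = μ (s i) := by
      refine le_antisymm ?_ (measure_mono subset_closure)
      rw [closure_eq_self_union_frontier]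
      refine (measure_union_le _ _).trans ?_
      simp [hf i]
    have h := tendsto_measure_cthickening (μ := μ) (s := s i) ⟨1, one_pos, measure_ne_top _ _⟩
    rw [hcl] at h
    exact ((ENNReal.tendsto_toReal (measure_ne_top _ _)).comp h).eventually_lt_const
      (by change μ.real (s i) < _; linarith)
  have h2 := (eventually_all.2 h1).filter_mono (nhdsWithin_le_nhds (s := Set.Ioi 0))
  have h3 : ∀ᶠ r in 𝓝[>] (0 : ℝ), r < η / 2 :=
    (eventually_lt_nhds (by linarith)).filter_mono nhdsWithin_le_nhds
  obtain ⟨r, ⟨hr1, hr2⟩, hr0⟩ := ((h2.and h3).and self_mem_nhdsWithin).exists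
  have hr0 : 0 < r := hr0
  refine ⟨r, hr0, fun ν _ hν i => ?_⟩
  have hν' : levyProkhorovEDist ν μ < ENNReal.ofReal r := by
    rw [levyProkhorovDist] at hν
    exact (ENNReal.lt_ofReal_iff_toReal_lt (levyProkhorovEDist_ne_top ν μ)).2 hν
  have h4 := left_measure_le_of_levyProkhorovEDist_lt hν' (hs i)
  rw [ENNReal.toReal_ofReal hr0.le] at h4
  have h5 : ν.real (s i) ≤ μ.real (Metric.thickening r (s i)) + r := by
    have := ENNReal.toReal_mono (by finiteness) h4
    rwa [ENNReal.toReal_add (by finiteness) (by finiteness), ENNReal.toReal_ofReal hr0.le] at this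
  have h6 : μ.real (Metric.thickening r (s i)) ≤ μ.real (Metric.cthickening r (s i)) :=
    measureReal_mono (Metric.thickening_subset_cthickening _ _)
  linarith [hr1 i]

/-- If `ν` exceeds `μ` by little on every cell of a finite partition whose cells are small, up to a
set of cells of small `μ`-mass, then `ν` is Lévy–Prokhorov close to `μ`. Upper bounds suffice
because both are probability measures. -/
lemma levyProkhorovDist_le_of_cells {Ω : Type*} [PseudoMetricSpace Ω] [MeasurableSpace Ω]
    [OpensMeasurableSpace Ω]
    (ν μ : Measure Ω) [IsProbabilityMeasure ν] [IsProbabilityMeasure μ] {T : Type*} [Fintype T]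
    (c : Ω → T) (hc : ∀ t, MeasurableSet (c ⁻¹' {t})) (G : Set T) {η η' ε : ℝ}
    (hd : ∀ z z', c z = c z' → c z ∈ G → dist z z' < ε)
    (hbad : μ.real (c ⁻¹' Gᶜ) ≤ η') (hcell : ∀ t, ν.real (c ⁻¹' {t}) ≤ μ.real (c ⁻¹' {t}) + η)
    (hη : 0 ≤ η) (hε : Fintype.card T * η + η' ≤ ε) : levyProkhorovDist ν μ ≤ ε := by
  have hη' : 0 ≤ η' := measureReal_nonneg.trans hbad
  have hε0 : 0 ≤ ε := le_trans (by positivity) hε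
  refine levyProkhorovDist_le_of_forall_le ν μ hε0 fun r B hr _ => ?_
  set H : Finset T := Finset.univ.filter fun t => ∃ z ∈ B, c z = t with hH
  have h1 : ν.real B ≤ ν.real (c ⁻¹' (H : Set T)) :=
    measureReal_mono fun z hz => by simpa [hH] using ⟨z, hz, rfl⟩
  have h2 : ν.real (c ⁻¹' (H : Set T)) ≤ μ.real (c ⁻¹' (H : Set T)) + Fintype.card T * η := by
    rw [← sum_measureReal_preimage_singleton H fun y _ => hc y,
      ← sum_measureReal_preimage_singleton H fun y _ => hc y]
    refine (Finset.sum_le_sum fun t _ => hcell t).trans ?_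
    rw [Finset.sum_add_distrib, Finset.sum_const, nsmul_eq_mul]
    gcongr
    exact Finset.card_le_univ H
  have h3 : μ.real (c ⁻¹' (H : Set T)) ≤ μ.real (Metric.thickening r B) + η' := by
    have : c ⁻¹' (H : Set T) ⊆ Metric.thickening r B ∪ c ⁻¹' Gᶜ := by
      intro z hz
      obtain ⟨w, hw, hwz⟩ : ∃ w ∈ B, c w = c z := by simpa [hH] using hz
      by_cases hG : c z ∈ G
      · exact Or.inl (Metric.mem_thickening_iff.2 ⟨w, hw, (hd z w hwz.symm hG).trans hr⟩)
      · exact Or.inr hG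
    exact (measureReal_mono this).trans ((measureReal_union_le _ _).trans (by gcongr))
  have h4 : ν.real B ≤ μ.real (Metric.thickening r B) + r := by linarith
  have hr0 : 0 ≤ r := hε0.trans hr.le
  rw [← ofReal_measureReal, ← ofReal_measureReal, ← ENNReal.ofReal_add measureReal_nonneg hr0]
  exact ENNReal.ofReal_le_ofReal h4

end Quantization

/-! ### Empirical distributions and a uniform weak law of large numbers -/

section Empirical

lemma isProbabilityMeasure_empDist {α : Type*} [MeasurableSpace α] {n : ℕ} (hn : 0 < n)
    (x : Fin n → α) : IsProbabilityMeasure (empDist x) := by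
  constructor
  simp only [empDist, Measure.smul_apply, Measure.coe_finsetSum, Finset.sum_apply, measure_univ,
    Finset.sum_const, Finset.card_univ, Fintype.card_fin, nsmul_eq_mul, mul_one, smul_eq_mul]
  exact ENNReal.inv_mul_cancel (by simpa using hn.ne') (by simp)

lemma empDist_real {α : Type*} [MeasurableSpace α] {n : ℕ} (x : Fin n → α) {s : Set α}
    (hs : MeasurableSet s) :
    (empDist x).real s = (n : ℝ)⁻¹ * ∑ i, s.indicator 1 (x i) := by
  rw [measureReal_def, empDist]
  simp only [Measure.smul_apply, Measure.coe_finsetSum, Finset.sum_apply, smul_eq_mul,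
    ENNReal.toReal_mul, ENNReal.toReal_inv, ENNReal.toReal_natCast, Measure.dirac_apply' _ hs]
  rw [ENNReal.toReal_sum fun i _ => by by_cases h : x i ∈ s <;> simp [h]]
  congr 1
  refine Finset.sum_congr rfl fun i _ => ?_
  by_cases h : x i ∈ s <;> simp [h]

/-- Chebyshev's inequality for independent, not necessarily identically distributed, variables with
values in `[0, 1]`. -/
lemma chebyshev_pi {α : Type*} [MeasurableSpace α] {n : ℕ} (hn : 0 < n) (Q : Fin n → Measure α)
    [∀ i, IsProbabilityMeasure (Q i)] (f : Fin n → α → ℝ) (hf : ∀ i, Measurable (f i))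
    (hf01 : ∀ i x, f i x ∈ Set.Icc (0 : ℝ) 1) {η : ℝ} (hη : 0 < η) :
    (Measure.pi Q).real {x | (∑ i, ∫ t, f i t ∂(Q i)) + n * η ≤ ∑ i, f i (x i)} ≤
      1 / (n * η ^ 2) := by
  have hn' : (0 : ℝ) < n := by exact_mod_cast hn
  have hL : ∀ i, MemLp (f i) 2 (Q i) := fun i =>
    memLp_of_bounded (a := 0) (b := 1) (ae_of_all _ (hf01 i)) (hf i).aestronglyMeasurable 2
  have hL' : ∀ i, MemLp (fun x : Fin n → α => f i (x i)) 2 (Measure.pi Q) := fun i =>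
    (hL i).comp_measurePreserving (measurePreserving_eval Q i)
  have hvar := variance_sum_pi hL
  have hvle : Var[∑ i, fun x : Fin n → α => f i (x i); Measure.pi Q] ≤ n := by
    rw [hvar]
    calc ∑ i, Var[f i; Q i] ≤ ∑ i : Fin n, (1 : ℝ) := Finset.sum_le_sum fun i _ =>
          (variance_le_sq_of_bounded (ae_of_all _ (hf01 i)) (hf i).aemeasurable).trans (by norm_num)
      _ = n := by simp
  have hmean : (Measure.pi Q)[∑ i, fun x : Fin n → α => f i (x i)] = ∑ i, ∫ t, f i t ∂(Q i) := by
    simp only [Finset.sum_apply]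
    rw [integral_finsetSum _ fun i _ => (hL' i).integrable (by norm_num)]
    exact Finset.sum_congr rfl fun i _ => integral_comp_eval (hf i).aestronglyMeasurable
  have hch := meas_ge_le_variance_div_sq (memLp_finsetSum' Finset.univ fun i _ => hL' i)
    (show 0 < n * η by positivity)
  rw [hmean] at hch
  have hsub : {x : Fin n → α | (∑ i, ∫ t, f i t ∂(Q i)) + n * η ≤ ∑ i, f i (x i)} ⊆
      {x | n * η ≤ |(∑ i, fun x : Fin n → α => f i (x i)) x - ∑ i, ∫ t, f i t ∂(Q i)|} := by
    intro x hx
    simp only [Set.mem_ofPred_eq, Finset.sum_apply] at hx ⊢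
    exact le_trans (by linarith) (le_abs_self _)
  refine ENNReal.toReal_le_of_le_ofReal (by positivity)
    ((measure_mono hsub).trans (hch.trans (ENNReal.ofReal_le_ofReal ?_)))
  rw [div_le_div_iff₀ (by positivity) (by positivity)]
  nlinarith [sq_nonneg η, mul_le_mul_of_nonneg_right hvle (show 0 ≤ n * η ^ 2 by positivity)]

end Empirical

end JointTypicality

namespace JointTypicality

/-! ### The tilted product measure -/

section Core

/-- The conditional law `Q` of the first coordinate given that the second one lies in `B`
(the marginal law when `B` is null). Its divergence from the marginal, weighted by the mass of `B`,
is at most the contribution of the strip over `B` to the mutual information. -/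
lemma exists_conditional_law {𝒳 𝒴 : Type*} [MeasurableSpace 𝒳] [MeasurableSpace 𝒴]
    (P : Measure (𝒳 × 𝒴)) [IsProbabilityMeasure P] {B : Set 𝒴} (hB : MeasurableSet B)
    (hI : InformationTheory.klDiv P ((P.map Prod.fst).prod (P.map Prod.snd)) ≠ ∞) :
    ∃ Q : Measure 𝒳, IsProbabilityMeasure Q ∧
      (∀ A, MeasurableSet A → (P.map Prod.snd).real B * Q.real A = P.real (A ×ˢ B)) ∧
      InformationTheory.klDiv Q (P.map Prod.fst) ≠ ∞ ∧
      (P.map Prod.snd) B * InformationTheory.klDiv Q (P.map Prod.fst) ≤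
        InformationTheory.klDiv (P.restrict (Set.univ ×ˢ B))
          (((P.map Prod.fst).prod (P.map Prod.snd)).restrict (Set.univ ×ˢ B)) := by
  have : IsProbabilityMeasure (P.map Prod.fst) :=
    Measure.isProbabilityMeasure_map measurable_fst.aemeasurable
  have : IsProbabilityMeasure (P.map Prod.snd) :=
    Measure.isProbabilityMeasure_map measurable_snd.aemeasurable
  have hsnd : ∀ A : Set 𝒳, P (A ×ˢ B) ≤ (P.map Prod.snd) B := fun A => by
    rw [Measure.map_apply measurable_snd hB]
    exact measure_mono fun z hz => hz.2
  by_cases h0 : (P.map Prod.snd) B = 0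
  · refine ⟨P.map Prod.fst, inferInstance, fun A _ => ?_, ?_, ?_⟩
    · have h1 : P (A ×ˢ B) = 0 := le_antisymm (h0 ▸ hsnd A) zero_le
      simp [measureReal_def, h0, h1]
    · simp
    · simp [h0]
  set p := (P.map Prod.snd) B with hp
  have hpt : p ≠ ∞ := measure_ne_top _ _
  set M : Measure 𝒳 := (P.restrict (Set.univ ×ˢ B)).map Prod.fst with hM
  have hMA : ∀ A, MeasurableSet A → M A = P (A ×ˢ B) := by
    intro A hA
    rw [hM, Measure.map_apply measurable_fst hA, Measure.restrict_apply (measurable_fst hA)]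
    congr 1
    ext z; simp
  have hMu : M Set.univ = p := by
    rw [hMA _ MeasurableSet.univ, hp, Measure.map_apply measurable_snd hB]
    congr 1
    ext z; simp
  have hsm : p.toNNReal • (p⁻¹ • M) = M := by
    change (p.toNNReal : ℝ≥0∞) • (p⁻¹ • M) = M
    rw [ENNReal.coe_toNNReal hpt, smul_smul, ENNReal.mul_inv_cancel h0 hpt, one_smul]
  have hPX : (((P.map Prod.fst).prod (P.map Prod.snd)).restrict (Set.univ ×ˢ B)).map Prod.fst =
      p.toNNReal • P.map Prod.fst := by
    change _ = (p.toNNReal : ℝ≥0∞) • P.map Prod.fst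
    rw [ENNReal.coe_toNNReal hpt, ← Measure.prod_restrict, Measure.map_fst_prod,
      Measure.restrict_univ, Measure.restrict_apply_univ]
  have hprob : IsProbabilityMeasure (p⁻¹ • M) :=
    ⟨by rw [Measure.smul_apply, hMu, smul_eq_mul, ENNReal.inv_mul_cancel h0 hpt]⟩
  have hkl : p * InformationTheory.klDiv (p⁻¹ • M) (P.map Prod.fst) ≤
      InformationTheory.klDiv (P.restrict (Set.univ ×ˢ B))
          (((P.map Prod.fst).prod (P.map Prod.snd)).restrict (Set.univ ×ˢ B)) := by
    have := InformationTheory.klDiv_smul_same (μ := p⁻¹ • M) (ν := P.map Prod.fst) p.toNNReal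
    rw [hsm, ← hPX, ENNReal.coe_toNNReal hpt] at this
    rw [← this]
    exact InformationTheory.klDiv_map_le _ _ measurable_fst
  refine ⟨p⁻¹ • M, hprob, fun A hA => ?_, ?_, hkl⟩
  · rw [measureReal_def, measureReal_def, measureReal_def, ← ENNReal.toReal_mul,
      Measure.smul_apply, smul_eq_mul, ← mul_assoc, ENNReal.mul_inv_cancel h0 hpt, one_mul,
      hMA A hA]
  · intro htop
    rw [htop, ENNReal.mul_top h0, top_le_iff] at hkl
    exact ne_top_of_le_ne_top hI
      (klDiv_restrict_le _ _ (MeasurableSet.univ.prod hB)) hkl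

/-- For every sequence `y` with empirical distribution near the second marginal there is a law `μ`
on `𝒳ⁿ` under which joint typicality with `y` has probability close to one, and whose
divergence from the i.i.d. law is at most `n` times the mutual information, up to a small error. -/
lemma exists_tilted_law
    {𝒳 : Type*} [MetricSpace 𝒳] [TopologicalSpace.SeparableSpace 𝒳]
    [MeasurableSpace 𝒳] [BorelSpace 𝒳]
    {𝒴 : Type*} [MetricSpace 𝒴] [TopologicalSpace.SeparableSpace 𝒴]
    [MeasurableSpace 𝒴] [BorelSpace 𝒴]
    (P : Measure (𝒳 × 𝒴)) [IsProbabilityMeasure P]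
    (hI : InformationTheory.klDiv P ((P.map Prod.fst).prod (P.map Prod.snd)) ≠ ∞)
    {δ ε : ℝ} (hδ : 0 < δ) (hε : 0 < ε) :
    ∃ r > (0 : ℝ), ∃ C : ℝ, ∀ n : ℕ, 0 < n → ∀ y : Fin n → 𝒴,
      levyProkhorovDist (empDist y) (P.map Prod.snd) < r →
      ∃ (μ : Measure (Fin n → 𝒳)) (E : Set (Fin n → 𝒳)), IsProbabilityMeasure μ ∧
        MeasurableSet E ∧
        E ⊆ {x | levyProkhorovDist (empDist fun i => (x i, y i)) P < ε} ∧
        1 - C / n ≤ μ.real E ∧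
        InformationTheory.klDiv μ (Measure.pi fun _ => P.map Prod.fst) ≠ ∞ ∧
        (InformationTheory.klDiv μ (Measure.pi fun _ => P.map Prod.fst)).toReal ≤
          n * ((InformationTheory.klDiv P
            ((P.map Prod.fst).prod (P.map Prod.snd))).toReal + δ) := by
  have hPX : IsProbabilityMeasure (P.map Prod.fst) :=
    Measure.isProbabilityMeasure_map measurable_fst.aemeasurable
  have hPY : IsProbabilityMeasure (P.map Prod.snd) :=
    Measure.isProbabilityMeasure_map measurable_snd.aemeasurable
  obtain ⟨J, a, ham, -, had, hal⟩ := exists_quantizer (P.map Prod.fst)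
    (show 0 < ε / 2 by linarith) (show 0 < ε / 8 by linarith)
  obtain ⟨M, b, hbm, hbf, hbd, hbl⟩ := exists_quantizer (P.map Prod.snd)
    (show 0 < ε / 2 by linarith) (show 0 < ε / 8 by linarith)
  choose Q hQp hQ hQtop hQle using fun k => exists_conditional_law P (hbm k) hI
  set I := InformationTheory.klDiv P ((P.map Prod.fst).prod (P.map Prod.snd)) with hIdef
  set D : Fin (M + 1) → ℝ := fun k => (InformationTheory.klDiv (Q k) (P.map Prod.fst)).toReal
    with hD
  have hD0 : ∀ k, 0 ≤ D k := fun k => ENNReal.toReal_nonneg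
  have hDsum : ∑ k, (P.map Prod.snd).real (b ⁻¹' {k}) * D k ≤ I.toReal := by
    have h1 : ∑ k, (P.map Prod.snd) (b ⁻¹' {k}) *
        InformationTheory.klDiv (Q k) (P.map Prod.fst) ≤ I := by
      refine (Finset.sum_le_sum fun k _ => hQle k).trans
        (sum_klDiv_restrict_le _ _ (fun k => MeasurableSet.univ.prod (hbm k)) ?_)
      intro k l hkl
      rw [Function.onFun, Set.disjoint_left]
      rintro z ⟨-, hz⟩ ⟨-, hz'⟩
      exact hkl (Eq.trans (Eq.symm hz) hz')
    have h2 := ENNReal.toReal_mono hI h1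
    rw [ENNReal.toReal_sum fun k _ => ENNReal.mul_ne_top (measure_ne_top _ _) (hQtop k)] at h2
    simp only [ENNReal.toReal_mul] at h2
    exact h2
  set K : ℝ := (Fintype.card (Fin (J + 1) × Fin (M + 1)) : ℝ) with hK
  have hK0 : 0 < K := by rw [hK]; exact_mod_cast Fintype.card_pos
  have hS0 : 0 ≤ ∑ k, D k := Finset.sum_nonneg fun k _ => hD0 k
  -- `η` is the error allowed in each cell; it has to be small against the number of cells and
  -- against the total divergence of the conditional laws.
  obtain ⟨η, hη, hη1, hη2⟩ : ∃ η > 0, K * (2 * η) ≤ ε / 4 ∧ η * ∑ k, D k ≤ δ := by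
    refine ⟨min (ε / (8 * K)) (δ / (∑ k, D k + 1)), by positivity, ?_, ?_⟩
    · calc K * (2 * min (ε / (8 * K)) (δ / (∑ k, D k + 1))) ≤ K * (2 * (ε / (8 * K))) := by
            gcongr; exact min_le_left _ _
        _ = ε / 4 := by field_simp; norm_num
    · calc min (ε / (8 * K)) (δ / (∑ k, D k + 1)) * ∑ k, D k
          ≤ δ / (∑ k, D k + 1) * (∑ k, D k + 1) := by
            gcongr
            · exact min_le_right _ _
            · linarith
        _ = δ := by field_simp
  obtain ⟨r, hr, hrad⟩ := exists_levyProkhorov_radius (P.map Prod.snd) (fun k => b ⁻¹' {k})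
    hbm hbf hη
  refine ⟨r, hr, K / η ^ 2, fun n hn y hy => ?_⟩
  have hn' : (0 : ℝ) < n := by exact_mod_cast hn
  have := isProbabilityMeasure_empDist hn y
  have hy' := hrad (empDist y) hy
  -- Each cell of `𝒴` contains about the right number of the `y i`.
  have hcount : ∀ k, ∑ i, (b ⁻¹' {k}).indicator (1 : 𝒴 → ℝ) (y i) ≤
      n * ((P.map Prod.snd).real (b ⁻¹' {k}) + η) := by
    intro k
    have h := hy' k
    rw [empDist_real y (hbm k)] at h
    rwa [inv_mul_le_iff₀ hn'] at h
  set c : 𝒳 × 𝒴 → Fin (J + 1) × Fin (M + 1) := fun z => (a z.1, b z.2) with hc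
  have hcell : ∀ t, c ⁻¹' {t} = (a ⁻¹' {t.1}) ×ˢ (b ⁻¹' {t.2}) := by
    intro t; ext z; simp [hc, Prod.ext_iff]
  have hcm : ∀ t, MeasurableSet (c ⁻¹' {t}) := fun t => by
    rw [hcell]; exact (ham _).prod (hbm _)
  set f : Fin (J + 1) × Fin (M + 1) → Fin n → 𝒳 → ℝ := fun t i x =>
    (c ⁻¹' {t}).indicator 1 (x, y i) with hf
  have hfm : ∀ t i, Measurable (f t i) := fun t i =>
    (measurable_one.indicator (hcm t)).comp measurable_prodMk_right
  have hf01 : ∀ t i x, f t i x ∈ Set.Icc (0 : ℝ) 1 := by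
    intro t i x
    by_cases h : (x, y i) ∈ c ⁻¹' {t} <;> simp [hf, h]
  have hfi : ∀ t i, ∫ x, f t i x ∂(Q (b (y i))) =
      (b ⁻¹' {t.2}).indicator (1 : 𝒴 → ℝ) (y i) * (Q t.2).real (a ⁻¹' {t.1}) := by
    intro t i
    by_cases h : b (y i) = t.2
    · have : f t i = (a ⁻¹' {t.1}).indicator 1 := by
        funext x
        by_cases hx : a x = t.1 <;> simp [hf, hcell, Set.indicator, h, hx]
      rw [this, h, integral_indicator_one (ham _)]
      simp [Set.indicator, h]
    · have : f t i = 0 := by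
        funext x
        simp [hf, hcell, Set.indicator, h]
      simp [this, Set.indicator, h]
  set bad : Fin (J + 1) × Fin (M + 1) → Set (Fin n → 𝒳) := fun t =>
    {x | (∑ i, ∫ u, f t i u ∂(Q (b (y i)))) + n * η ≤ ∑ i, f t i (x i)} with hbad
  have hbadm : ∀ t, MeasurableSet (bad t) := fun t =>
    measurableSet_le measurable_const
      (Finset.measurable_sum _ fun i _ => (hfm t i).comp (measurable_pi_apply i))
  have hEm : MeasurableSet (⋃ t, bad t)ᶜ := (MeasurableSet.iUnion hbadm).compl
  have hklsum := klDiv_pi_le (fun i => Q (b (y i))) (fun _ => P.map Prod.fst)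
  have hsumtop : ∑ i, InformationTheory.klDiv (Q (b (y i))) (P.map Prod.fst) ≠ ∞ :=
    ENNReal.sum_ne_top.2 fun i _ => hQtop _
  -- The event `E` is that no product cell is overpopulated.
  refine ⟨Measure.pi fun i => Q (b (y i)), (⋃ t, bad t)ᶜ, inferInstance, hEm, ?_, ?_,
    ne_top_of_le_ne_top hsumtop hklsum, ?_⟩
  · intro x hx
    simp only [Set.mem_compl_iff, Set.mem_iUnion, not_exists] at hx
    have := isProbabilityMeasure_empDist hn fun i => (x i, y i)
    refine lt_of_le_of_lt (b := ε / 2) ?_ (by linarith)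
    refine levyProkhorovDist_le_of_cells _ P c hcm {t | t.1 ≠ Fin.last J ∧ t.2 ≠ Fin.last M}
      (η := 2 * η) (η' := ε / 4) ?_ ?_ ?_ (by positivity) (by linarith)
    · rintro z z' h ⟨h1, h2⟩
      rw [Prod.ext_iff] at h
      rw [Prod.dist_eq]
      exact max_lt (had _ _ h.1 h1) (hbd _ _ h.2 h2)
    · have hsub : c ⁻¹' {t | t.1 ≠ Fin.last J ∧ t.2 ≠ Fin.last M}ᶜ ⊆
          Prod.fst ⁻¹' (a ⁻¹' {Fin.last J}) ∪ Prod.snd ⁻¹' (b ⁻¹' {Fin.last M}) := by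
        intro z hz
        by_contra hcon
        simp only [Set.mem_union, not_or] at hcon
        exact hz ⟨hcon.1, hcon.2⟩
      refine (measureReal_mono hsub).trans ((measureReal_union_le _ _).trans ?_)
      rw [← map_measureReal_apply measurable_fst (ham _),
        ← map_measureReal_apply measurable_snd (hbm _)]
      linarith
    · intro t
      have hxt : ∑ i, f t i (x i) < (∑ i, ∫ u, f t i u ∂(Q (b (y i)))) + n * η :=
        not_le.1 (hx t)
      have hQ1 : (Q t.2).real (a ⁻¹' {t.1}) ≤ 1 := measureReal_le_one
      have hQ0 : 0 ≤ (Q t.2).real (a ⁻¹' {t.1}) := measureReal_nonneg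
      have hmean : ∑ i, ∫ u, f t i u ∂(Q (b (y i))) ≤ n * (P.real (c ⁻¹' {t}) + η) := by
        simp_rw [hfi]
        rw [← Finset.sum_mul, hcell, ← hQ t.2 _ (ham t.1)]
        refine (mul_le_mul_of_nonneg_right (hcount t.2) hQ0).trans ?_
        rw [mul_assoc, add_mul]
        gcongr
        exact mul_le_of_le_one_right hη.le hQ1
      rw [empDist_real _ (hcm t), inv_mul_le_iff₀ hn']
      change ∑ i, f t i (x i) ≤ _
      linarith
  · rw [probReal_compl_eq_one_sub (MeasurableSet.iUnion hbadm)]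
    have h1 : (Measure.pi fun i => Q (b (y i))).real (⋃ t, bad t) ≤
        ∑ t : Fin (J + 1) × Fin (M + 1), 1 / (n * η ^ 2) :=
      (measureReal_iUnion_fintype_le _).trans (Finset.sum_le_sum fun t _ =>
        chebyshev_pi hn _ (f t) (hfm t) (hf01 t) hη)
    rw [Finset.sum_const, Finset.card_univ, nsmul_eq_mul] at h1
    have h2 : K * (1 / (n * η ^ 2)) = K / η ^ 2 / n := by field_simp
    linarith
  · refine (ENNReal.toReal_mono hsumtop hklsum).trans ?_
    rw [ENNReal.toReal_sum fun i _ => hQtop _]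
    calc ∑ i, D (b (y i))
        = ∑ i, ∑ k, (b ⁻¹' {k}).indicator (1 : 𝒴 → ℝ) (y i) * D k := by
          refine Finset.sum_congr rfl fun i _ => ?_
          simp [Set.indicator]
      _ = ∑ k, (∑ i, (b ⁻¹' {k}).indicator (1 : 𝒴 → ℝ) (y i)) * D k := by
          rw [Finset.sum_comm]
          simp_rw [Finset.sum_mul]
      _ ≤ ∑ k, (n * ((P.map Prod.snd).real (b ⁻¹' {k}) + η)) * D k :=
          Finset.sum_le_sum fun k _ => mul_le_mul_of_nonneg_right (hcount k) (hD0 k)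
      _ = n * (∑ k, (P.map Prod.snd).real (b ⁻¹' {k}) * D k + η * ∑ k, D k) := by
          rw [Finset.mul_sum, ← Finset.sum_add_distrib, Finset.mul_sum]
          exact Finset.sum_congr rfl fun k _ => by ring
      _ ≤ n * (I.toReal + δ) := by gcongr

/-- The exponential rate produced by the change of measure tends to `-(I + δ / 2)`, hence is
eventually above `-I - δ`. -/
lemma eventually_rate (I C : ℝ) {δ : ℝ} (hδ : 0 < δ) :
    ∀ᶠ n : ℕ in atTop, 0 < n ∧ 0 < 1 - C / (n : ℝ) ∧
      -I - δ ≤ 1 / (n : ℝ) *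
        (Real.log (1 - C / n) - (n * (I + δ / 2) + 1) / (1 - C / n)) := by
  have h1 : Tendsto (fun n : ℕ => 1 - C / (n : ℝ)) atTop (𝓝 1) := by
    simpa using (tendsto_const_div_atTop_nhds_zero_nat C).const_sub 1
  have h2 : Tendsto (fun n : ℕ => 1 / (n : ℝ)) atTop (𝓝 0) := tendsto_const_div_atTop_nhds_zero_nat 1
  have h3 : Tendsto (fun n : ℕ => 1 / (n : ℝ) * Real.log (1 - C / n) -
      (I + δ / 2 + 1 / (n : ℝ)) / (1 - C / n)) atTop (𝓝 (-(I + δ / 2))) := by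
    have := (h2.mul (h1.log one_ne_zero)).sub ((h2.const_add (I + δ / 2)).div h1 one_ne_zero)
    simpa using this
  filter_upwards [eventually_gt_atTop 0, h1.eventually_const_lt one_pos,
    h3.eventually_const_lt (show -I - δ < -(I + δ / 2) by linarith)] with n hn hpos h
  refine ⟨hn, hpos, h.le.trans (le_of_eq ?_)⟩
  have hn' : (n : ℝ) ≠ 0 := by exact_mod_cast hn.ne'
  rw [mul_sub]
  congr 1
  rw [← mul_div_assoc]
  congr 1
  field_simp

end Core

end JointTypicality

/-- Large-deviations lower bound for joint typicality: for typical `y`-sequences the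
probability that an i.i.d. `P_X` sequence is jointly typical with them decays exponentially
at rate at most `I(X;Y) + δ`, where `I(X;Y) = KL(P_{XY} ‖ P_X ⊗ P_Y)`. -/
theorem large_deviation_lower_bound
    {𝒳 : Type*} [MetricSpace 𝒳] [TopologicalSpace.SeparableSpace 𝒳] [CompleteSpace 𝒳]
    [MeasurableSpace 𝒳] [BorelSpace 𝒳]
    {𝒴 : Type*} [MetricSpace 𝒴] [TopologicalSpace.SeparableSpace 𝒴] [CompleteSpace 𝒴]
    [MeasurableSpace 𝒴] [BorelSpace 𝒴]
    (PXY : Measure (𝒳 × 𝒴)) [IsProbabilityMeasure PXY] :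
    ∀ δ > (0 : ℝ), ∀ ε > (0 : ℝ), ∃ εbar > (0 : ℝ),
      ∀ (N : ℕ) (y : (n : ℕ) → Fin n → 𝒴),
        (∀ n ≥ N, levyProkhorovDist (empDist (y n)) (PXY.map Prod.snd) < εbar) →
        -klDiv PXY ((PXY.map Prod.fst).prod (PXY.map Prod.snd)) - (δ : EReal) ≤
          atTop.liminf (fun n : ℕ =>
            (((1 / (n : ℝ)) *
              Real.log ((Measure.pi fun _ : Fin n => PXY.map Prod.fst)
                {x | levyProkhorovDist
                  (empDist (fun i : Fin n => (x i, y n i))) PXY < ε}).toReal : ℝ) : EReal)) := by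
  intro δ hδ ε hε
  have hPX : IsProbabilityMeasure (PXY.map Prod.fst) :=
    Measure.isProbabilityMeasure_map measurable_fst.aemeasurable
  have hPY : IsProbabilityMeasure (PXY.map Prod.snd) :=
    Measure.isProbabilityMeasure_map measurable_snd.aemeasurable
  by_cases hfin : PXY ≪ (PXY.map Prod.fst).prod (PXY.map Prod.snd) ∧
      Integrable (llr PXY ((PXY.map Prod.fst).prod (PXY.map Prod.snd))) PXY
  swap
  -- The mutual information is infinite, so the claimed lower bound is `⊥`.
  · refine ⟨1, one_pos, fun N y _ => ?_⟩
    rw [klDiv, if_neg hfin]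
    simp
  have hI := InformationTheory.klDiv_ne_top hfin.1 hfin.2
  have hIeq := InformationTheory.toReal_klDiv_of_measure_eq hfin.1 (by simp)
  obtain ⟨r, hr, C, hC⟩ := JointTypicality.exists_tilted_law PXY hI (half_pos hδ) hε
  refine ⟨r, hr, fun N y hy => ?_⟩
  rw [klDiv, if_pos hfin, ← hIeq]
  set I := (InformationTheory.klDiv PXY ((PXY.map Prod.fst).prod (PXY.map Prod.snd))).toReal
  refine le_liminf_of_le (by isBoundedDefault) ?_
  filter_upwards [eventually_ge_atTop N, JointTypicality.eventually_rate I C hδ]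
    with n hn ⟨hn0, hpos, hrate⟩
  obtain ⟨μ, E, hμ, hE, hsub, hq, htop, hkl⟩ := hC n hn0 (y n) (hy n hn)
  have hq0 : 0 < μ.real E := hpos.trans_le hq
  obtain ⟨hp, hlog⟩ := JointTypicality.log_measureReal_ge μ _ htop hE hq0
  norm_cast
  refine hrate.trans ?_
  gcongr
  have h0 := ENNReal.toReal_nonneg
    (a := InformationTheory.klDiv μ (Measure.pi fun _ : Fin n => PXY.map Prod.fst))
  calc Real.log (1 - C / n) - (n * (I + δ / 2) + 1) / (1 - C / n)
      ≤ Real.log (μ.real E) - ((InformationTheory.klDiv μ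
          (Measure.pi fun _ : Fin n => PXY.map Prod.fst)).toReal + 1) / μ.real E := by
        gcongr
    _ ≤ Real.log ((Measure.pi fun _ : Fin n => PXY.map Prod.fst).real E) := hlog
    _ ≤ _ := Real.log_le_log hp (measureReal_mono hsub)
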